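/- Let R and S be difunctional relations on a type α (difunctional subsets of α × α), and let ∼ be the relation of the previous statement: R ∼ S iff there is a difunctional T ⊆ α × α with R⁻¹ ∘ R = T ∘ T⁻¹ and T⁻¹ ∘ T = S ∘ S⁻¹. Then R ∼ R⁻¹, R ∼ Left(R) = R ∘ R⁻¹ and R ∼ Right(R) = R⁻¹ ∘ R; and if the composition R ∘ S is defined (R⁻¹ ∘ R = S ∘ S⁻¹) then R ∼ S, R ∼ R ∘ S and S ∼ R ∘ S. (Paper's Lemma (∼.B), in the base case of point types.) -/

import Mathlib

/-- The converse of a relation `R ⊆ α × β`. -/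
def rconv {α β : Type*} (R : Set (α × β)) : Set (β × α) := {p | (p.2, p.1) ∈ R}

/-- Composition of relations `R ⊆ α × β` and `S ⊆ β × γ`. -/
def rcomp {α β γ : Type*} (R : Set (α × β)) (S : Set (β × γ)) : Set (α × γ) :=
  {p | ∃ j, (p.1, j) ∈ R ∧ (j, p.2) ∈ S}

/-- A relation is difunctional when `R ∘ R⁻¹ ∘ R ⊆ R`, i.e.
`(i,j) ∈ R`, `(k,j) ∈ R`, `(k,l) ∈ R` imply `(i,l) ∈ R`. -/
def Difunctional {α β : Type*} (R : Set (α × β)) : Prop :=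
  ∀ ⦃i j k l⦄, (i, j) ∈ R → (k, j) ∈ R → (k, l) ∈ R → (i, l) ∈ R

/-- The paper's relation `R ∼ S`: there is a difunctional `T` with
`Right(R) = Left(T)` and `Right(T) = Left(S)`, i.e. `R ∘ T ∘ S` is defined. -/
def simRel {α : Type*} (R S : Set (α × α)) : Prop :=
  ∃ T : Set (α × α), Difunctional T ∧
    rcomp (rconv R) R = rcomp T (rconv T) ∧ rcomp (rconv T) T = rcomp S (rconv S)

/-!
The key fact is that `Left(R ∘ S) = Left(R)` and `Right(R ∘ S) = Right(S)` whenever `R` and `S` are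
difunctional and `R ∘ S` is defined. It supplies the connecting relations: `R⁻¹ ∘ R` for `R ∼ S`,
`R⁻¹` for `R ∼ R ∘ S` and `(R ∘ S)⁻¹` for `S ∼ R ∘ S`. The compositions `R ∘ R⁻¹` and `R⁻¹ ∘ R` are
always defined, so the claims about `R⁻¹`, `Left(R)` and `Right(R)` are instances of these three.
-/

section Composition

variable {α β γ δ : Type*}

/-- The relation `Left(R) = R ∘ R⁻¹`, an equivalence relation on the domain of `R` when `R` is
difunctional. -/
def leftRel (R : Set (α × β)) : Set (α × α) := rcomp R (rconv R)

/-- The relation `Right(R) = R⁻¹ ∘ R`. The composition `R ∘ S` is defined, in the paper's sense,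
when `rightRel R = leftRel S`. -/
def rightRel (R : Set (α × β)) : Set (β × β) := rcomp (rconv R) R

theorem rcomp_assoc (R : Set (α × β)) (S : Set (β × γ)) (T : Set (γ × δ)) :
    rcomp (rcomp R S) T = rcomp R (rcomp S T) :=
  SetRel.comp_assoc R S T

theorem rconv_rcomp (R : Set (α × β)) (S : Set (β × γ)) :
    rconv (rcomp R S) = rcomp (rconv S) (rconv R) :=
  SetRel.inv_comp R S

theorem difunctional_iff_leftRel_rcomp {R : Set (α × β)} :
    Difunctional R ↔ rcomp (leftRel R) R = R := by
  constructor
  · intro hR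
    refine Set.Subset.antisymm ?_ fun ⟨i, j⟩ hij => ⟨i, ⟨j, hij, hij⟩, hij⟩
    rintro ⟨i, l⟩ ⟨k, ⟨j, hij, hkj⟩, hkl⟩
    exact hR hij hkj hkl
  · intro h i j k l hij hkj hkl
    exact h.subset ⟨k, ⟨j, hij, hkj⟩, hkl⟩

protected theorem Difunctional.rconv {R : Set (α × β)} (hR : Difunctional R) :
    Difunctional (rconv R) :=
  fun _ _ _ _ hij hkj hkl => hR hkl hkj hij

variable {R : Set (α × β)} {S : Set (β × γ)}

theorem leftRel_rcomp (hR : Difunctional R) (h : rightRel R = leftRel S) :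
    leftRel (rcomp R S) = leftRel R :=
  calc leftRel (rcomp R S)
      = rcomp (rcomp R S) (rcomp (rconv S) (rconv R)) := by rw [leftRel, rconv_rcomp]
    _ = rcomp (rcomp R (leftRel S)) (rconv R) := by simp only [leftRel, rcomp_assoc]
    _ = rcomp (rcomp (leftRel R) R) (rconv R) := by
      rw [← h]
      simp only [leftRel, rightRel, rcomp_assoc]
    _ = leftRel R := by rw [difunctional_iff_leftRel_rcomp.mp hR, leftRel]

theorem rightRel_rcomp (hS : Difunctional S) (h : rightRel R = leftRel S) :
    rightRel (rcomp R S) = rightRel S :=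
  calc rightRel (rcomp R S)
      = leftRel (rconv (rcomp R S)) := rfl
    _ = leftRel (rcomp (rconv S) (rconv R)) := by rw [rconv_rcomp]
    _ = leftRel (rconv S) := leftRel_rcomp hS.rconv h.symm
    _ = rightRel S := rfl

protected theorem Difunctional.rcomp (hR : Difunctional R) (h : rightRel R = leftRel S) :
    Difunctional (rcomp R S) := by
  rw [difunctional_iff_leftRel_rcomp, leftRel_rcomp hR h, ← rcomp_assoc,
    difunctional_iff_leftRel_rcomp.mp hR]

end Composition

section SimRel

variable {α : Type*} {R S : Set (α × α)}

theorem simRel_of_leftRel_eq (hR : Difunctional R) (h : leftRel R = leftRel S) : simRel R S :=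
  ⟨rconv R, hR.rconv, rfl, h⟩

theorem simRel_of_rightRel_eq (hS : Difunctional S) (h : rightRel R = rightRel S) : simRel R S :=
  ⟨rconv S, hS.rconv, h, rfl⟩

theorem simRel_of_rightRel_eq_leftRel (hR : Difunctional R) (h : rightRel R = leftRel S) :
    simRel R S :=
  ⟨rightRel R, hR.rconv.rcomp rfl, (leftRel_rcomp hR.rconv rfl).symm,
    (rightRel_rcomp hR rfl).trans h⟩

theorem simRel_rcomp_left (hR : Difunctional R) (h : rightRel R = leftRel S) :
    simRel R (rcomp R S) :=
  simRel_of_leftRel_eq hR (leftRel_rcomp hR h).symm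

theorem simRel_rcomp_right (hR : Difunctional R) (hS : Difunctional S)
    (h : rightRel R = leftRel S) : simRel S (rcomp R S) :=
  simRel_of_rightRel_eq (hR.rcomp h) (rightRel_rcomp hS h).symm

end SimRel

/-- (∼.B), base case of point types: `R ∼ R⁻¹ ∼ Left(R) ∼ Right(R)`, and if
`R ∘ S` is defined then `R ∼ S ∼ R ∘ S`. -/
theorem stmt12 {α : Type*} (R S : Set (α × α))
    (hR : Difunctional R) (hS : Difunctional S) :
    simRel R (rconv R) ∧ simRel R (rcomp R (rconv R)) ∧ simRel R (rcomp (rconv R) R) ∧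
      (rcomp (rconv R) R = rcomp S (rconv S) →
        simRel R S ∧ simRel R (rcomp R S) ∧ simRel S (rcomp R S)) := by
  have right_eq_left_rconv : rightRel R = leftRel (rconv R) := rfl
  have right_rconv_eq_left : rightRel (rconv R) = leftRel R := rfl
  exact ⟨simRel_of_rightRel_eq_leftRel hR right_eq_left_rconv,
    simRel_rcomp_left hR right_eq_left_rconv,
    simRel_rcomp_right hR.rconv hR right_rconv_eq_left,
    fun h => ⟨simRel_of_rightRel_eq_leftRel hR h, simRel_rcomp_left hR h,
      simRel_rcomp_right hR hS h⟩⟩
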